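/- Let μ₂, μ₃ ∈ ℂ with positive real parts and μ₂ ≠ μ₃. Then for any z ∈ ℂ, the minimum over x₂, x₃ ∈ ℂ of ‖z·v[μ₂]' + x₂·v[μ₂] + x₃·v[μ₃]‖²_{H₂} equals |z|² |μ₂ − μ₃|² / ( (2 Re μ₂)³ · |μ₂ + conj μ₃|² ). -/

import Mathlib

open MeasureTheory Complex

/-!
Write `v[μ](s) = (s + conj μ)⁻¹`, so that `v[μ]' = -v[μ]²`. On the imaginary axis the Blaschke
factor `B[μ](s) = (s - μ) / (s + conj μ)` is unimodular and `B[μ] * conj v[μ] = -v[μ]`. Hence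
`e = B[a] B[b] v[a]` has the norm of `v[a]`, and `e * conj v[a]`, `e * conj v[b]` extend
holomorphically to the right half plane with quadratic decay, so Cauchy's theorem makes `e`
orthogonal to `v[a]` and `v[b]`. Partial fractions express `v[a]'` as a multiple of `e` plus a
combination of `v[a]` and `v[b]`, and Pythagoras' theorem identifies that multiple of `e` as the
residual of the projection.
-/

open ProbabilityTheory Filter Topology Bornology ComplexConjugate
open scoped InnerProductSpace

lemma integral_norm_add_sq_of_integral_inner_eq_zero {α 𝕜 E : Type*} [MeasurableSpace α] [RCLike 𝕜]
    [NormedAddCommGroup E] [InnerProductSpace 𝕜 E] {μ : Measure α} {f g : α → E}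
    (hf : MemLp f 2 μ) (hg : MemLp g 2 μ) (horth : ∫ x, ⟪f x, g x⟫_𝕜 ∂μ = 0) :
    ∫ x, ‖f x + g x‖ ^ 2 ∂μ = ∫ x, ‖f x‖ ^ 2 ∂μ + ∫ x, ‖g x‖ ^ 2 ∂μ := by
  have hfsq : Integrable (fun x ↦ ‖f x‖ ^ 2) μ := hf.integrable_norm_pow two_ne_zero
  have hgsq : Integrable (fun x ↦ ‖g x‖ ^ 2) μ := hg.integrable_norm_pow two_ne_zero
  have hinner : Integrable (fun x ↦ ⟪f x, g x⟫_𝕜) μ :=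
    (hf.norm.integrable_mul hg.norm).mono' (hf.1.inner hg.1)
      (.of_forall fun x ↦ norm_inner_le_norm _ _)
  have hre : ∫ x, RCLike.re ⟪f x, g x⟫_𝕜 ∂μ = 0 := by
    rw [integral_re hinner, horth, map_zero]
  simp_rw [norm_add_sq (𝕜 := 𝕜)]
  rw [integral_add (hfsq.fun_add (hinner.re.const_mul 2)) hgsq,
    integral_add hfsq (hinner.re.const_mul 2), integral_const_mul, hre, mul_zero, add_zero]

section CauchyHalfPlane

variable {E : Type*} [NormedAddCommGroup E] [NormedSpace ℂ E] {f : ℂ → E}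

lemma I_smul_intervalIntegral_imaginary_axis_eq
    (hcont : ContinuousOn f {s | 0 ≤ s.re}) (hdiff : DifferentiableOn ℂ f {s | 0 < s.re})
    {R : ℝ} (hR : 0 ≤ R) :
    I • ∫ y : ℝ in -R..R, f (I * y) =
      (∫ x : ℝ in 0..R, f (x + (-R : ℝ) * I)) - (∫ x : ℝ in 0..R, f (x + R * I)) +
        I • ∫ y : ℝ in -R..R, f (R + y * I) := by
  have hrect := integral_boundary_rect_eq_zero_of_continuousOn_of_differentiableOn f
    (⟨0, -R⟩ : ℂ) ⟨R, R⟩ (hcont.mono fun s hs ↦ ?_) (hdiff.mono fun s hs ↦ ?_)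
  · simp only [ofReal_zero, zero_add, mul_comm _ I] at hrect ⊢
    exact (sub_eq_zero.1 hrect).symm
  · exact (Set.uIcc_of_le hR ▸ hs.1).1
  · exact (min_eq_left hR ▸ hs.1).1

lemma norm_intervalIntegral_imaginary_axis_le
    (hcont : ContinuousOn f {s | 0 ≤ s.re}) (hdiff : DifferentiableOn ℂ f {s | 0 < s.re})
    {R C : ℝ} (hR : 0 ≤ R) (hC : ∀ s : ℂ, 0 ≤ s.re → R ≤ ‖s‖ → ‖f s‖ ≤ C) :
    ‖∫ y : ℝ in -R..R, f (I * y)‖ ≤ 4 * (C * R) := by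
  have hhor (t : ℝ) (ht : |t| = R) : ‖∫ x : ℝ in 0..R, f (x + t * I)‖ ≤ C * R := by
    have hbound := intervalIntegral.norm_integral_le_of_norm_le_const (a := 0) (b := R)
      (f := fun x : ℝ ↦ f (x + t * I)) (C := C) fun x hx ↦ ?_
    · simpa [abs_of_nonneg hR] using hbound
    · rw [Set.uIoc_of_le hR] at hx
      refine hC _ (by simpa using hx.1.le) ?_
      simpa [ht] using abs_im_le_norm (x + t * I)
  have hvert : ‖∫ y : ℝ in -R..R, f (R + y * I)‖ ≤ C * (2 * R) := by
    have hbound := intervalIntegral.norm_integral_le_of_norm_le_const (a := -R) (b := R)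
      (f := fun y : ℝ ↦ f (R + y * I)) (C := C) fun y _ ↦ ?_
    · rwa [sub_neg_eq_add, ← two_mul, abs_of_nonneg (by positivity)] at hbound
    · refine hC _ (by simpa using hR) ?_
      simpa [abs_of_nonneg hR] using abs_re_le_norm (R + y * I)
  calc ‖∫ y : ℝ in -R..R, f (I * y)‖
      = ‖I • ∫ y : ℝ in -R..R, f (I * y)‖ := by rw [norm_smul, norm_I, one_mul]
    _ ≤ C * R + C * R + C * (2 * R) := by
      rw [I_smul_intervalIntegral_imaginary_axis_eq hcont hdiff hR]
      refine (norm_add_le _ _).trans (add_le_add ((norm_sub_le _ _).trans (add_le_add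
        (hhor (-R) (by rw [abs_neg, abs_of_nonneg hR])) (hhor R (abs_of_nonneg hR)))) ?_)
      rwa [norm_smul, norm_I, one_mul]
    _ = 4 * (C * R) := by ring

theorem integral_imaginary_axis_eq_zero
    (hcont : ContinuousOn f {s | 0 ≤ s.re}) (hdiff : DifferentiableOn ℂ f {s | 0 < s.re})
    (hint : Integrable fun ω : ℝ ↦ f (I * ω))
    (hdecay : Tendsto (fun s ↦ s • f s) (cobounded ℂ ⊓ 𝓟 {s | 0 ≤ s.re}) (𝓝 0)) :
    ∫ ω : ℝ, f (I * ω) = 0 := by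
  refine tendsto_nhds_unique
    (intervalIntegral_tendsto_integral hint tendsto_neg_atTop_atBot tendsto_id) ?_
  rw [NormedAddGroup.tendsto_nhds_zero]
  intro ε hε
  have hsmall : ∀ᶠ s in cobounded ℂ, 0 ≤ s.re → ‖s • f s‖ < ε / 8 :=
    eventually_inf_principal.1 (NormedAddGroup.tendsto_nhds_zero.1 hdecay _ (by positivity))
  obtain ⟨R₀, -, hR₀⟩ := hasBasis_cobounded_norm.eventually_iff.1 hsmall
  filter_upwards [eventually_ge_atTop R₀, eventually_gt_atTop 0] with R hR hRpos
  have hbound (s : ℂ) (hs : 0 ≤ s.re) (hRs : R ≤ ‖s‖) : ‖f s‖ ≤ ε / 8 / R := by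
    rw [le_div_iff₀' hRpos]
    calc R * ‖f s‖ ≤ ‖s‖ * ‖f s‖ := by gcongr
      _ = ‖s • f s‖ := (norm_smul _ _).symm
      _ ≤ ε / 8 := (hR₀ (hR.trans hRs) hs).le
  calc ‖∫ y : ℝ in -R..R, f (I * y)‖
      ≤ 4 * (ε / 8 / R * R) := norm_intervalIntegral_imaginary_axis_le hcont hdiff hRpos.le hbound
    _ = ε / 2 := by field_simp; norm_num
    _ < ε := half_lt_self hε

end CauchyHalfPlane

lemma add_conj_ne_zero {μ s : ℂ} (hμ : 0 < μ.re) (hs : 0 ≤ s.re) : s + conj μ ≠ 0 := by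
  intro h
  have hre : s.re + μ.re = 0 := by simpa using congrArg re h
  linarith

/-- The reproducing kernel `v[μ]` of the Hardy space `H₂` of the right half plane, for the inner
product `(2π)⁻¹ ∫ f(iω) conj (g(iω)) dω`; its derivative `v[μ]'` is `-v[μ]²`. -/
noncomputable def szegoKernel (μ s : ℂ) : ℂ := (s + conj μ)⁻¹

/-- The Blaschke factor of the right half plane with zero `μ`. -/
noncomputable def blaschkeFactor (μ s : ℂ) : ℂ := (s - μ) / (s + conj μ)

section SzegoKernel

variable {μ s : ℂ}

lemma blaschkeFactor_eq_one_sub (hs : s + conj μ ≠ 0) :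
    blaschkeFactor μ s = 1 - (μ + conj μ) * szegoKernel μ s := by
  rw [blaschkeFactor, szegoKernel]
  field_simp
  ring

lemma differentiableOn_szegoKernel (hμ : 0 < μ.re) :
    DifferentiableOn ℂ (szegoKernel μ) {s | 0 ≤ s.re} :=
  DifferentiableOn.inv (by fun_prop) fun _ hs ↦ add_conj_ne_zero hμ hs

lemma differentiableOn_blaschkeFactor (hμ : 0 < μ.re) :
    DifferentiableOn ℂ (blaschkeFactor μ) {s | 0 ≤ s.re} :=
  DifferentiableOn.div (by fun_prop) (by fun_prop) fun _ hs ↦ add_conj_ne_zero hμ hs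

lemma tendsto_szegoKernel_cobounded (μ : ℂ) : Tendsto (szegoKernel μ) (cobounded ℂ) (𝓝 0) :=
  tendsto_inv₀_cobounded.comp (tendsto_add_const_cobounded _)

lemma eventually_add_conj_ne_zero (μ : ℂ) : ∀ᶠ s in cobounded ℂ, s + conj μ ≠ 0 :=
  (tendsto_add_const_cobounded (conj μ)).eventually (eventually_ne_cobounded 0)

lemma tendsto_mul_szegoKernel_cobounded (μ : ℂ) :
    Tendsto (fun s ↦ s * szegoKernel μ s) (cobounded ℂ) (𝓝 1) := by
  have hlim := ((tendsto_szegoKernel_cobounded μ).const_mul (conj μ)).const_sub 1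
  rw [mul_zero, sub_zero] at hlim
  refine hlim.congr' ?_
  filter_upwards [eventually_add_conj_ne_zero μ] with s hs
  rw [szegoKernel]
  field_simp
  ring

lemma tendsto_blaschkeFactor_cobounded (μ : ℂ) :
    Tendsto (blaschkeFactor μ) (cobounded ℂ) (𝓝 1) := by
  have hlim := ((tendsto_szegoKernel_cobounded μ).const_mul (μ + conj μ)).const_sub 1
  rw [mul_zero, sub_zero] at hlim
  refine hlim.congr' ?_
  filter_upwards [eventually_add_conj_ne_zero μ] with s hs
  exact (blaschkeFactor_eq_one_sub hs).symm

end SzegoKernel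

section ImaginaryAxis

variable {a b c : ℂ}

lemma I_mul_ofReal_add_conj_ne_zero (ha : 0 < a.re) (ω : ℝ) : I * ω + conj a ≠ 0 :=
  add_conj_ne_zero ha (by simp)

lemma conj_I_mul_ofReal_add_conj (a : ℂ) (ω : ℝ) : conj (I * ω + conj a) = -(I * ω - a) := by
  simp only [map_add, map_mul, conj_I, conj_ofReal, conj_conj]
  ring

lemma norm_blaschkeFactor_I_mul (ha : 0 < a.re) (ω : ℝ) : ‖blaschkeFactor a (I * ω)‖ = 1 := by
  rw [blaschkeFactor, norm_div, ← norm_neg, ← conj_I_mul_ofReal_add_conj, norm_conj,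
    div_self (norm_ne_zero_iff.2 (I_mul_ofReal_add_conj_ne_zero ha ω))]

lemma blaschkeFactor_mul_conj_szegoKernel_I_mul (ha : 0 < a.re) (ω : ℝ) :
    blaschkeFactor a (I * ω) * conj (szegoKernel a (I * ω)) = -szegoKernel a (I * ω) := by
  have hsub : I * ω - a ≠ 0 := by
    rw [← neg_ne_zero, ← conj_I_mul_ofReal_add_conj, map_ne_zero]
    exact I_mul_ofReal_add_conj_ne_zero ha ω
  rw [szegoKernel, blaschkeFactor, map_inv₀, conj_I_mul_ofReal_add_conj]
  field_simp

lemma continuous_szegoKernel_I_mul (ha : 0 < a.re) :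
    Continuous fun ω : ℝ ↦ szegoKernel a (I * ω) :=
  (differentiableOn_szegoKernel ha).continuousOn.comp_continuous (by fun_prop) (by simp)

lemma continuous_blaschkeFactor_I_mul (ha : 0 < a.re) :
    Continuous fun ω : ℝ ↦ blaschkeFactor a (I * ω) :=
  (differentiableOn_blaschkeFactor ha).continuousOn.comp_continuous (by fun_prop) (by simp)

lemma norm_szegoKernel_I_mul_sq (ha : 0 < a.re) (ω : ℝ) :
    ‖szegoKernel a (I * ω)‖ ^ 2 =
      Real.pi / a.re * cauchyPDFReal a.im a.re.toNNReal ω := by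
  have hsq : ‖I * ω + conj a‖ ^ 2 = (ω - a.im) ^ 2 + a.re ^ 2 := by
    rw [← normSq_eq_norm_sq, normSq_apply]
    simp only [add_re, add_im, mul_re, mul_im, I_re, I_im, ofReal_re, ofReal_im, conj_re, conj_im]
    ring
  rw [szegoKernel, norm_inv, inv_pow, hsq, cauchyPDFReal_def, Real.coe_toNNReal _ ha.le]
  field_simp

lemma integral_norm_szegoKernel_I_mul_sq (ha : 0 < a.re) :
    ∫ ω : ℝ, ‖szegoKernel a (I * ω)‖ ^ 2 = Real.pi / a.re := by
  simp_rw [norm_szegoKernel_I_mul_sq ha]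
  rw [integral_const_mul, integral_cauchyPDFReal_eq_one _ (Real.toNNReal_pos.2 ha).ne',
    mul_one]

lemma memLp_szegoKernel_I_mul (ha : 0 < a.re) :
    MemLp (fun ω : ℝ ↦ szegoKernel a (I * ω)) 2 := by
  rw [memLp_two_iff_integrable_sq_norm (continuous_szegoKernel_I_mul ha).aestronglyMeasurable]
  simp_rw [norm_szegoKernel_I_mul_sq ha]
  exact (integrable_cauchyPDFReal _).const_mul _

lemma integrable_blaschkeFactor_mul_szegoKernel_mul_szegoKernel
    (ha : 0 < a.re) (hb : 0 < b.re) (hc : 0 < c.re) :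
    Integrable fun ω : ℝ ↦
      blaschkeFactor c (I * ω) * (szegoKernel a (I * ω) * szegoKernel b (I * ω)) :=
  ((memLp_szegoKernel_I_mul ha).integrable_mul (memLp_szegoKernel_I_mul hb)).bdd_mul
    (continuous_blaschkeFactor_I_mul hc).aestronglyMeasurable
    (.of_forall fun ω ↦ (norm_blaschkeFactor_I_mul hc ω).le)

lemma integral_blaschkeFactor_mul_szegoKernel_mul_szegoKernel
    (ha : 0 < a.re) (hb : 0 < b.re) (hc : 0 < c.re) :
    ∫ ω : ℝ, blaschkeFactor c (I * ω) * (szegoKernel a (I * ω) * szegoKernel b (I * ω)) = 0 := by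
  have hdiff : DifferentiableOn ℂ
      (fun s ↦ blaschkeFactor c s * (szegoKernel a s * szegoKernel b s)) {s | 0 ≤ s.re} :=
    (differentiableOn_blaschkeFactor hc).mul
      ((differentiableOn_szegoKernel ha).mul (differentiableOn_szegoKernel hb))
  refine integral_imaginary_axis_eq_zero hdiff.continuousOn
    (hdiff.mono fun s (hs : 0 < s.re) ↦ hs.le)
    (integrable_blaschkeFactor_mul_szegoKernel_mul_szegoKernel ha hb hc) ?_
  have hlim := (tendsto_blaschkeFactor_cobounded c).mul
    ((tendsto_mul_szegoKernel_cobounded a).mul (tendsto_szegoKernel_cobounded b))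
  rw [mul_zero, mul_zero] at hlim
  refine (hlim.congr fun s ↦ ?_).mono_left inf_le_left
  rw [smul_eq_mul]
  ring

end ImaginaryAxis

/-- The Takenaka–Malmquist function `B[a] B[b] v[a]`, which for `a ≠ b` spans the orthogonal
complement of `v[a]` and `v[b]` in the span of `v[a]'`, `v[a]` and `v[b]`. -/
noncomputable def takenakaMalmquist (a b s : ℂ) : ℂ :=
  blaschkeFactor a s * blaschkeFactor b s * szegoKernel a s

section TakenakaMalmquist

variable {a b : ℂ}

lemma norm_takenakaMalmquist_I_mul (ha : 0 < a.re) (hb : 0 < b.re) (ω : ℝ) :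
    ‖takenakaMalmquist a b (I * ω)‖ = ‖szegoKernel a (I * ω)‖ := by
  rw [takenakaMalmquist, norm_mul, norm_mul, norm_blaschkeFactor_I_mul ha,
    norm_blaschkeFactor_I_mul hb, one_mul, one_mul]

lemma memLp_takenakaMalmquist_I_mul (ha : 0 < a.re) (hb : 0 < b.re) :
    MemLp (fun ω : ℝ ↦ takenakaMalmquist a b (I * ω)) 2 :=
  (memLp_szegoKernel_I_mul ha).congr_norm
    (((continuous_blaschkeFactor_I_mul ha).mul (continuous_blaschkeFactor_I_mul hb)).mul
      (continuous_szegoKernel_I_mul ha)).aestronglyMeasurable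
    (.of_forall fun ω ↦ (norm_takenakaMalmquist_I_mul ha hb ω).symm)

lemma inner_takenakaMalmquist_I_mul (ha : 0 < a.re) (hb : 0 < b.re) (x y : ℂ) (ω : ℝ) :
    ⟪x * szegoKernel a (I * ω) + y * szegoKernel b (I * ω), takenakaMalmquist a b (I * ω)⟫_ℂ =
      -conj x * (blaschkeFactor b (I * ω) * (szegoKernel a (I * ω) * szegoKernel a (I * ω))) +
        -conj y * (blaschkeFactor a (I * ω) * (szegoKernel a (I * ω) * szegoKernel b (I * ω))) := by
  rw [RCLike.inner_apply, map_add, map_mul, map_mul, takenakaMalmquist]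
  linear_combination
    conj x * blaschkeFactor b (I * ω) * szegoKernel a (I * ω) *
        blaschkeFactor_mul_conj_szegoKernel_I_mul ha ω +
      conj y * blaschkeFactor a (I * ω) * szegoKernel a (I * ω) *
        blaschkeFactor_mul_conj_szegoKernel_I_mul hb ω

lemma integral_inner_takenakaMalmquist_eq_zero (ha : 0 < a.re) (hb : 0 < b.re) (x y : ℂ) :
    ∫ ω : ℝ, ⟪x * szegoKernel a (I * ω) + y * szegoKernel b (I * ω),
      takenakaMalmquist a b (I * ω)⟫_ℂ = 0 := by
  simp_rw [inner_takenakaMalmquist_I_mul ha hb]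
  rw [integral_add
      ((integrable_blaschkeFactor_mul_szegoKernel_mul_szegoKernel ha ha hb).const_mul _)
      ((integrable_blaschkeFactor_mul_szegoKernel_mul_szegoKernel ha hb ha).const_mul _),
    integral_const_mul, integral_const_mul,
    integral_blaschkeFactor_mul_szegoKernel_mul_szegoKernel ha ha hb,
    integral_blaschkeFactor_mul_szegoKernel_mul_szegoKernel ha hb ha, mul_zero, mul_zero, add_zero]

lemma integral_norm_add_takenakaMalmquist_sq (ha : 0 < a.re) (hb : 0 < b.re) (k x y : ℂ) :
    ∫ ω : ℝ, ‖x * szegoKernel a (I * ω) + y * szegoKernel b (I * ω) +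
        k * takenakaMalmquist a b (I * ω)‖ ^ 2 =
      (∫ ω : ℝ, ‖x * szegoKernel a (I * ω) + y * szegoKernel b (I * ω)‖ ^ 2) +
        ‖k‖ ^ 2 * (Real.pi / a.re) := by
  have horth : ∫ ω : ℝ, ⟪x * szegoKernel a (I * ω) + y * szegoKernel b (I * ω),
      k * takenakaMalmquist a b (I * ω)⟫_ℂ = 0 := by
    simp_rw [← smul_eq_mul k, inner_smul_right]
    rw [integral_const_mul, integral_inner_takenakaMalmquist_eq_zero ha hb, mul_zero]
  have hnorm : ∫ ω : ℝ, ‖k * takenakaMalmquist a b (I * ω)‖ ^ 2 = ‖k‖ ^ 2 * (Real.pi / a.re) := by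
    simp_rw [norm_mul, norm_takenakaMalmquist_I_mul ha hb, mul_pow]
    rw [integral_const_mul, integral_norm_szegoKernel_I_mul_sq ha]
  rw [← hnorm]
  exact integral_norm_add_sq_of_integral_inner_eq_zero
    (((memLp_szegoKernel_I_mul ha).const_mul x).add ((memLp_szegoKernel_I_mul hb).const_mul y))
    ((memLp_takenakaMalmquist_I_mul ha hb).const_mul k) horth

/-- The coefficient of `B[a] B[b] v[a]` in the partial fraction expansion of `v[a]'`, that is, the
quotient of the coefficients of their double poles at `-conj a`. -/
noncomputable def residualCoeff (a b : ℂ) : ℂ :=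
  (conj a - conj b) / ((conj a + a) * (conj a + b))

lemma exists_neg_szegoKernel_sq_eq (ha : 0 < a.re) (hb : 0 < b.re) (hab : a ≠ b) :
    ∃ p q : ℂ, ∀ s, s + conj a ≠ 0 → s + conj b ≠ 0 → -szegoKernel a s ^ 2 =
      p * szegoKernel a s + q * szegoKernel b s + residualCoeff a b * takenakaMalmquist a b s := by
  have hab' : conj a - conj b ≠ 0 := by rwa [← map_sub, map_ne_zero, sub_ne_zero]
  have haa : conj a + a ≠ 0 := add_comm a (conj a) ▸ add_conj_ne_zero ha ha.le
  have hba : conj a + b ≠ 0 := add_comm b (conj a) ▸ add_conj_ne_zero ha hb.le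
  -- `q` cancels the pole of `takenakaMalmquist a b` at `-conj b`, and `p + q = -residualCoeff a b`
  -- since `v[a]'` is `O(s⁻²)` while `s * takenakaMalmquist a b s` tends to `1`.
  let q := -residualCoeff a b * ((conj b + a) * (conj b + b) / (conj a - conj b) ^ 2)
  refine ⟨-residualCoeff a b - q, q, fun s hsa hsb ↦ ?_⟩
  simp only [q, residualCoeff, takenakaMalmquist, blaschkeFactor, szegoKernel]
  field_simp
  ring

lemma norm_residualCoeff_sq_mul (ha : 0 < a.re) (b : ℂ) :
    ‖residualCoeff a b‖ ^ 2 * (Real.pi / a.re) =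
      2 * Real.pi * (‖a - b‖ ^ 2 / ((2 * a.re) ^ 3 * ‖a + conj b‖ ^ 2)) := by
  have hsub : ‖conj a - conj b‖ = ‖a - b‖ := by rw [← map_sub, norm_conj]
  have hself : ‖conj a + a‖ = 2 * a.re := by
    rw [add_comm, add_conj, norm_real, Real.norm_of_nonneg (by positivity)]
  have hadd : ‖conj a + b‖ = ‖a + conj b‖ := by rw [← norm_conj, map_add, conj_conj]
  rw [residualCoeff, norm_div, norm_mul, hsub, hself, hadd]
  field_simp

lemma exists_integral_norm_neg_szegoKernel_sq_add_sq_eq (ha : 0 < a.re) (hb : 0 < b.re)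
    (hab : a ≠ b) :
    ∃ p q : ℂ, ∀ z x y : ℂ,
      ∫ ω : ℝ, ‖z * -szegoKernel a (I * ω) ^ 2 + x * szegoKernel a (I * ω)
          + y * szegoKernel b (I * ω)‖ ^ 2 =
        (∫ ω : ℝ, ‖(x + z * p) * szegoKernel a (I * ω) + (y + z * q) * szegoKernel b (I * ω)‖ ^ 2) +
          2 * Real.pi * (‖z‖ ^ 2 * ‖a - b‖ ^ 2 / ((2 * a.re) ^ 3 * ‖a + conj b‖ ^ 2)) := by
  obtain ⟨p, q, hpq⟩ := exists_neg_szegoKernel_sq_eq ha hb hab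
  refine ⟨p, q, fun z x y ↦ ?_⟩
  have hsplit (ω : ℝ) : z * -szegoKernel a (I * ω) ^ 2 + x * szegoKernel a (I * ω)
        + y * szegoKernel b (I * ω) =
      (x + z * p) * szegoKernel a (I * ω) + (y + z * q) * szegoKernel b (I * ω)
        + z * residualCoeff a b * takenakaMalmquist a b (I * ω) := by
    rw [hpq _ (I_mul_ofReal_add_conj_ne_zero ha ω) (I_mul_ofReal_add_conj_ne_zero hb ω)]
    ring
  simp_rw [hsplit]
  rw [integral_norm_add_takenakaMalmquist_sq ha hb, norm_mul, mul_pow, mul_assoc (‖z‖ ^ 2),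
    norm_residualCoeff_sq_mul ha]
  ring

end TakenakaMalmquist

/-- For `Re μ₂, Re μ₃ > 0` with `μ₂ ≠ μ₃` and any `z ∈ ℂ`, the minimum over `x₂, x₃ ∈ ℂ` of
`‖z v[μ₂]' + x₂ v[μ₂] + x₃ v[μ₃]‖²_{H₂}` equals
`|z|² |μ₂ − μ₃|² / ((2 Re μ₂)³ |μ₂ + conj μ₃|²)`. -/
theorem stmt_14 (μ₂ μ₃ z : ℂ) (h2 : 0 < μ₂.re) (h3 : 0 < μ₃.re) (hne : μ₂ ≠ μ₃) :
    IsLeast {r : ℝ | ∃ x₂ x₃ : ℂ, r = (1 / (2 * Real.pi)) *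
        ∫ ω : ℝ, ‖z * (-((I * ω + (starRingEnd ℂ) μ₂) ^ 2)⁻¹)
          + x₂ * (I * ω + (starRingEnd ℂ) μ₂)⁻¹
          + x₃ * (I * ω + (starRingEnd ℂ) μ₃)⁻¹‖ ^ 2}
      (‖z‖ ^ 2 * ‖μ₂ - μ₃‖ ^ 2 / ((2 * μ₂.re) ^ 3 * ‖μ₂ + (starRingEnd ℂ) μ₃‖ ^ 2)) := by
  obtain ⟨p, q, hpq⟩ := exists_integral_norm_neg_szegoKernel_sq_add_sq_eq h2 h3 hne
  have hscale (A B : ℝ) :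
      1 / (2 * Real.pi) * (A + 2 * Real.pi * B) = 1 / (2 * Real.pi) * A + B := by
    field_simp
  simp only [szegoKernel, inv_pow] at hpq
  simp only [hpq, hscale]
  refine ⟨⟨-(z * p), -(z * q), by simp⟩, ?_⟩
  rintro r ⟨x₂, x₃, rfl⟩
  exact le_add_of_nonneg_left (by positivity)
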